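/- arXiv:2303.09090 — 3 statements merged into one kernel-verified Lean document; each statement's English description precedes it below -/
import Mathlib

section
/- Let n ≥ 1, let a_i < b_i for i = 1,…,n, and let u : ∏_{i=1}^n [a_i,b_i] → [0,∞] be a convex function on the box. Then for every x in the open box ∏_{i=1}^n (a_i,b_i) one has (∏_{i=1}^n min{x_i − a_i, b_i − x_i}) · u(x) ≤ ∫_{∏_{i=1}^n [a_i,b_i]} u dλⁿ, where λⁿ denotes n-dimensional Lebesgue measure. -/
open MeasureTheory
open scoped ENNReal

/-- A `[0,∞]`-valued function on a set `K ⊆ ℝⁿ` is convex if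
`u((1−t)x+ty) ≤ (1−t)u(x)+t·u(y)` in `[0,∞]` for all `x, y ∈ K` and `t ∈ [0,1]`. -/
def ConvexFnOn {n : ℕ} (K : Set (Fin n → ℝ)) (u : (Fin n → ℝ) → ℝ≥0∞) : Prop :=
  ∀ ⦃x⦄, x ∈ K → ∀ ⦃y⦄, y ∈ K → ∀ ⦃t : ℝ⦄, 0 ≤ t → t ≤ 1 →
    u ((1 - t) • x + t • y) ≤ ENNReal.ofReal (1 - t) * u x + ENNReal.ofReal t * u y

/-- Mean value estimate: for a non-negative convex function `u` on the box
`∏ [aᵢ, bᵢ]` and every point `x` of the open box,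
`(∏ min {xᵢ−aᵢ, bᵢ−xᵢ}) · u(x) ≤ ∫_{∏ [aᵢ,bᵢ]} u dλⁿ`. -/
theorem mean_value_estimate (n : ℕ) (hn : 1 ≤ n) (a b : Fin n → ℝ)
    (hab : ∀ i, a i < b i) (u : (Fin n → ℝ) → ℝ≥0∞)
    (hu : ConvexFnOn (Set.Icc a b) u) :
    ∀ x ∈ Set.univ.pi (fun i => Set.Ioo (a i) (b i)),
      ENNReal.ofReal (∏ i, min (x i - a i) (b i - x i)) * u x
        ≤ ∫⁻ y in Set.Icc a b, u y := by
  intro x hx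
  set r : Fin n → ℝ := fun i => min (x i - a i) (b i - x i) with hr
  have hr0 : ∀ i, 0 < r i := fun i => by
    have := hx i (Set.mem_univ i)
    exact lt_min (by linarith [this.1]) (by linarith [this.2])
  have hra : ∀ i, r i ≤ x i - a i := fun i => min_le_left _ _
  have hrb : ∀ i, r i ≤ b i - x i := fun i => min_le_right _ _
  have hP : 0 < ∏ i, r i := Finset.prod_pos fun i _ => hr0 i
  change ENNReal.ofReal (∏ i, r i) * u x ≤ _
  rw [mul_comm, ← ENNReal.le_div_iff_mul_le (Or.inl (by simpa using hP))
    (Or.inl ENNReal.ofReal_ne_top)]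
  refine le_of_forall_lt fun c hc => ?_
  obtain ⟨c', hcc, hc'⟩ := exists_between hc
  refine lt_of_lt_of_le hcc ?_
  clear hcc hc c
  rw [ENNReal.le_div_iff_mul_le (Or.inl (by simpa using hP))
    (Or.inl ENNReal.ofReal_ne_top)]
  set B : Set (Fin n → ℝ) := Set.Icc (x - r) (x + r) with hB
  have hBsub : B ⊆ Set.Icc a b := by
    refine Set.Icc_subset_Icc (fun i => ?_) (fun i => ?_)
    · have := hra i
      simp only [Pi.sub_apply]; linarith
    · have := hrb i
      simp only [Pi.add_apply]; linarith
  set D : Set (Fin n → ℝ) := {y ∈ B | u y < c'} with hD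
  have hBconv : Convex ℝ B := convex_Icc _ _
  have hDconv : Convex ℝ D := by
    intro y hy z hz s t hs ht hst
    refine ⟨hBconv hy.1 hz.1 hs ht hst, ?_⟩
    obtain rfl : s = 1 - t := by linarith
    refine lt_of_le_of_lt (hu (hBsub hy.1) (hBsub hz.1) ht (by linarith)) ?_
    calc _ ≤ ENNReal.ofReal (1 - t) * max (u y) (u z) + ENNReal.ofReal t * max (u y) (u z) := by
            gcongr
            · exact le_max_left _ _
            · exact le_max_right _ _
      _ = max (u y) (u z) := by
            rw [← add_mul, ← ENNReal.ofReal_add hs ht]; simp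
      _ < c' := max_lt hy.2 hz.2
  have hDm : NullMeasurableSet D volume := hDconv.nullMeasurableSet volume
  have hBm : MeasurableSet B := measurableSet_Icc
  have hrefl : volume D ≤ volume (B \ D) := by
    rw [← (Measure.measurePreserving_sub_left volume ((2:ℝ) • x)).measure_preimage hDm]
    refine measure_mono fun y hy => ?_
    have hy' : (2:ℝ) • x - y ∈ D := hy
    have hyB : y ∈ B := by
      refine ⟨fun i => ?_, fun i => ?_⟩
      · have := hy'.1.2 i
        simp at this ⊢; linarith
      · have := hy'.1.1 i
        simp at this ⊢; linarith
    refine ⟨hyB, fun hyD => ?_⟩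
    have h := hDconv hyD hy' (a := 1/2) (b := 1/2) (by norm_num) (by norm_num) (by norm_num)
    have e : (1/2:ℝ) • y + (1/2:ℝ) • ((2:ℝ) • x - y) = x := by
      ext i; simp; ring
    rw [e] at h
    exact absurd h.2 (not_lt.2 hc'.le)
  have hvol : volume B ≤ 2 * volume (B \ D) := by
    calc volume B ≤ volume (D ∪ B \ D) := measure_mono (fun y hy => by
            by_cases h : y ∈ D
            · exact Or.inl h
            · exact Or.inr ⟨hy, h⟩)
      _ ≤ volume D + volume (B \ D) := measure_union_le _ _
      _ ≤ volume (B \ D) + volume (B \ D) := by gcongr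
      _ = _ := (two_mul _).symm
  have hBv : 2 * ENNReal.ofReal (∏ i, r i) ≤ volume B := by
    have e : volume B = ENNReal.ofReal (2 ^ n * ∏ i, r i) := by
      rw [hB, Real.volume_Icc_pi, ← ENNReal.ofReal_prod_of_nonneg]
      · congr 1
        have : ∀ i, (x + r) i - (x - r) i = 2 * r i := fun i => by
          simp only [Pi.add_apply, Pi.sub_apply]; ring
        simp only [this, Finset.prod_mul_distrib]
        simp
      · intro i _
        have := hr0 i
        simp only [Pi.add_apply, Pi.sub_apply]; linarith
    have h2 : (2:ℝ≥0∞) = ENNReal.ofReal 2 := by simp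
    rw [e, h2, ← ENNReal.ofReal_mul (by norm_num)]
    apply ENNReal.ofReal_le_ofReal
    have : (2:ℝ) ≤ 2 ^ n := le_self_pow₀ (by norm_num) (by omega)
    gcongr
  have hfin : ENNReal.ofReal (∏ i, r i) ≤ volume (B \ D) :=
    (ENNReal.mul_le_mul_iff_right (by norm_num) (by norm_num)).1 (hBv.trans hvol)
  calc c' * ENNReal.ofReal (∏ i, r i) ≤ c' * volume (B \ D) := by gcongr
    _ = ∫⁻ _ in B \ D, c' := (setLIntegral_const _ _).symm
    _ ≤ ∫⁻ y in B \ D, u y := by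
        refine lintegral_mono_ae ?_
        filter_upwards [ae_restrict_mem₀ (hBm.nullMeasurableSet.diff hDm)] with y hy
        by_contra h
        exact hy.2 ⟨hy.1, not_le.1 h⟩
    _ ≤ ∫⁻ y in Set.Icc a b, u y :=
        lintegral_mono_set (Set.diff_subset.trans hBsub)
end

section
/- Let 0 ≤ p ≤ n be integers, r > 0, and let u : Δⁿ_p(r) → [0,∞] be convex. Then for every r' with r/2 ≤ r' < r and every x ∈ Δⁿ_p(r') with x_i > 0 for all 1 ≤ i ≤ p, one has (r − r')ⁿ · (∏_{i=1}^p x_i) · u(x) ≤ (r')^p · ∫_{Δⁿ_p(r)} u dλⁿ. -/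
open MeasureTheory
open scoped ENNReal

/-- `Δⁿ_p(r) = { x ∈ [0,∞)^p × (−r,r)^{n−p} : x₁+⋯+x_p < r }`. -/
def stdSlab (n p : ℕ) (r : ℝ) : Set (Fin n → ℝ) :=
  {x | (∀ i : Fin n, (i : ℕ) < p → 0 ≤ x i) ∧
       (∀ i : Fin n, p ≤ (i : ℕ) → x i ∈ Set.Ioo (-r) r) ∧
       ∑ i ∈ Finset.univ.filter (fun i : Fin n => (i : ℕ) < p), x i < r}

lemma stdSlab_convex (n p : ℕ) (r : ℝ) : Convex ℝ (stdSlab n p r) := by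
  intro x hx y hy a b ha hb hab
  obtain ⟨h1, h2, h3⟩ := hx
  obtain ⟨k1, k2, k3⟩ := hy
  refine ⟨fun i hi => ?_, fun i hi => ?_, ?_⟩
  · have := mul_nonneg ha (h1 i hi)
    have := mul_nonneg hb (k1 i hi)
    simp only [Pi.add_apply, Pi.smul_apply, smul_eq_mul]
    linarith
  · exact (convex_Ioo (-r) r) (h2 i hi) (k2 i hi) ha hb hab
  · simp only [Pi.add_apply, Pi.smul_apply, smul_eq_mul, Finset.sum_add_distrib, ← Finset.mul_sum]
    exact (convex_Iio r) h3 k3 ha hb hab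

open Classical in
lemma ext_aemeasurable {n : ℕ} (K : Set (Fin n → ℝ)) (hK : Convex ℝ K)
    (u : (Fin n → ℝ) → ℝ≥0∞) (hu : ConvexFnOn K u) :
    AEMeasurable (K.piecewise u (fun _ => ⊤)) volume := by
  have key : ∀ c : ℝ≥0∞, NullMeasurableSet ((K.piecewise u (fun _ => ⊤)) ⁻¹' Set.Iic c) volume := by
    intro c
    by_cases hc : c = ⊤
    · subst hc
      simp
    have : (K.piecewise u (fun _ => ⊤)) ⁻¹' Set.Iic c = {y | y ∈ K ∧ u y ≤ c} := by
      ext y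
      by_cases hy : y ∈ K <;> simp [hy, hc]
    rw [this]
    apply Convex.nullMeasurableSet
    rintro x ⟨hx, hx'⟩ y ⟨hy, hy'⟩ a b ha hb hab
    refine ⟨hK hx hy ha hb hab, ?_⟩
    have ha' : a = 1 - b := by linarith
    subst ha'
    refine (hu hx hy hb (by linarith)).trans ?_
    calc _ ≤ ENNReal.ofReal (1 - b) * c + ENNReal.ofReal b * c := by gcongr
      _ = c := by
        rw [← add_mul, ← ENNReal.ofReal_add ha hb]
        simp
  have : NullMeasurable (K.piecewise u (fun _ => ⊤)) (volume : Measure (Fin n → ℝ)) := by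
    have := measurable_of_Iic (δ := NullMeasurableSpace (Fin n → ℝ) volume) (f := K.piecewise u (fun _ => ⊤)) key
    exact fun s hs => this hs
  exact this.aemeasurable

lemma mean_box {n : ℕ} (K : Set (Fin n → ℝ)) (hK : Convex ℝ K)
    (u : (Fin n → ℝ) → ℝ≥0∞) (hu : ConvexFnOn K u) (x a : Fin n → ℝ)
    (hB : Set.Icc (x - a) (x + a) ⊆ K) :
    volume (Set.Icc (x - a) (x + a)) * u x ≤ ∫⁻ y in K, u y := by
  classical
  set B := Set.Icc (x - a) (x + a) with hBdef
  have hBm : MeasurableSet B := measurableSet_Icc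
  set v := K.piecewise u (fun _ => ⊤) with hv
  have hvm : AEMeasurable v volume := ext_aemeasurable K hK u hu
  have hvu : ∀ y ∈ B, v y = u y := fun y hy => by simp [hv, hB hy]
  have hpre : (fun y => (x + x) - y) ⁻¹' B = B := by
    ext y
    simp only [hBdef, Set.mem_preimage, Set.mem_Icc, Pi.le_def, Pi.sub_apply, Pi.add_apply]
    constructor
    · rintro ⟨h1, h2⟩
      exact ⟨fun i => by linarith [h2 i], fun i => by linarith [h1 i]⟩
    · rintro ⟨h1, h2⟩
      exact ⟨fun i => by linarith [h2 i], fun i => by linarith [h1 i]⟩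
  have hrefl : ∫⁻ y in B, v ((x + x) - y) = ∫⁻ y in B, v y := by
    have := (Measure.measurePreserving_sub_left (volume : Measure (Fin n → ℝ)) (x + x)).setLIntegral_comp_preimage_emb
      (MeasurableEquiv.subLeft (x + x)).measurableEmbedding v B
    rwa [hpre] at this
  have hle : ∫⁻ y in B, v y ≤ ∫⁻ y in K, u y := by
    rw [setLIntegral_congr_fun hBm hvu]
    exact lintegral_mono_set hB
  have h2 : 2 * (volume B * u x) ≤ 2 * ∫⁻ y in B, v y := by
    calc 2 * (volume B * u x) = ∫⁻ y in B, 2 * u x := by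
          rw [setLIntegral_const]; ring
      _ ≤ ∫⁻ y in B, (v y + v ((x + x) - y)) := by
          apply setLIntegral_mono' hBm
          intro y hy
          have hy' : (x + x) - y ∈ B := by
            have : y ∈ (fun y => (x + x) - y) ⁻¹' B := by rw [hpre]; exact hy
            exact this
          rw [hvu y hy, hvu _ hy']
          have := hu (hB hy) (hB hy') (t := 1/2) (by norm_num) (by norm_num)
          have e : (1 - (1/2 : ℝ)) • y + (1/2 : ℝ) • ((x + x) - y) = x := by
            ext i; simp; ring
          rw [e] at this
          have e2 : (1 - (1/2 : ℝ)) = 1/2 := by norm_num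
          rw [e2, ← mul_add] at this
          calc 2 * u x ≤ 2 * (ENNReal.ofReal (1/2) * (u y + u ((x + x) - y))) := by gcongr
            _ = _ := by
              rw [← mul_assoc]
              have : (2 : ℝ≥0∞) * ENNReal.ofReal (1/2) = 1 := by
                rw [← ENNReal.ofReal_ofNat, ← ENNReal.ofReal_mul (by norm_num)]
                norm_num
              rw [this, one_mul]
      _ = _ := by
          rw [lintegral_add_left' hvm.restrict, hrefl, two_mul]
  rw [ENNReal.mul_le_mul_iff_right (by norm_num) (by norm_num)] at h2
  exact h2.trans hle

theorem convenient_mean_value_estimate (n p : ℕ) (hpn : p ≤ n) (r r' : ℝ)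
    (hr : 0 < r) (hr1 : r / 2 ≤ r') (hr2 : r' < r)
    (u : (Fin n → ℝ) → ℝ≥0∞) (hu : ConvexFnOn (stdSlab n p r) u) :
    ∀ x ∈ stdSlab n p r', (∀ i : Fin n, (i : ℕ) < p → 0 < x i) →
      ENNReal.ofReal ((r - r') ^ n *
          ∏ i ∈ Finset.univ.filter (fun i : Fin n => (i : ℕ) < p), x i) * u x
        ≤ ENNReal.ofReal (r' ^ p) * ∫⁻ y in stdSlab n p r, u y := by
  intro x hx hpos
  obtain ⟨h1, h2, h3⟩ := hx
  have hr0 : 0 < r' := by linarith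
  set a : Fin n → ℝ := fun i => if (i : ℕ) < p then (r - r') * x i / r' else r - r' with ha
  have ha0 : ∀ i, 0 ≤ a i := by
    intro i
    simp only [ha]
    split_ifs with h
    · have := hpos i h
      have : 0 < r - r' := by linarith
      positivity
    · linarith
  have hB : Set.Icc (x - a) (x + a) ⊆ stdSlab n p r := by
    rintro y ⟨hy1, hy2⟩
    refine ⟨fun i hi => ?_, fun i hi => ?_, ?_⟩
    · have := hy1 i
      simp only [ha, hi, Pi.sub_apply, if_true] at this
      have h : (r - r') * x i / r' ≤ x i := by
        rw [div_le_iff₀ hr0]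
        nlinarith [hpos i hi]
      linarith
    · have e1 := hy1 i
      have e2 := hy2 i
      simp only [ha, hi.not_gt, Pi.sub_apply, Pi.add_apply, if_false] at e1 e2
      have := h2 i hi
      exact ⟨by linarith [this.1], by linarith [this.2]⟩
    · calc _ ≤ ∑ i ∈ Finset.univ.filter (fun i : Fin n => (i : ℕ) < p), (r / r') * x i := by
            apply Finset.sum_le_sum
            intro i hi
            have hi' : (i : ℕ) < p := by simpa using hi
            have := hy2 i
            simp only [ha, hi', Pi.add_apply, if_true] at this
            refine this.trans (le_of_eq ?_)
            field_simp
            ring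
        _ = (r / r') * ∑ i ∈ Finset.univ.filter (fun i : Fin n => (i : ℕ) < p), x i := by
            rw [Finset.mul_sum]
        _ < (r / r') * r' := by gcongr
        _ = r := by field_simp
  have main := mean_box _ (stdSlab_convex n p r) u hu x a hB
  have hvol : ENNReal.ofReal (∏ i, a i) ≤ volume (Set.Icc (x - a) (x + a)) := by
    rw [Real.volume_Icc_pi, ENNReal.ofReal_prod_of_nonneg (fun i _ => ha0 i)]
    refine Finset.prod_le_prod' fun i _ => ENNReal.ofReal_le_ofReal ?_
    simp only [Pi.add_apply, Pi.sub_apply]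
    linarith [ha0 i]
  have hprod : (r - r') ^ n * ∏ i ∈ Finset.univ.filter (fun i : Fin n => (i : ℕ) < p), x i
      = r' ^ p * ∏ i, a i := by
    have c : r' ^ p = ∏ i : Fin n, if (i : ℕ) < p then r' else 1 := by
      rw [← Finset.prod_filter, Finset.prod_const, Fin.card_filter_val_lt, min_eq_right hpn]
    have d : (r - r') ^ n = ∏ i : Fin n, (r - r') := by simp
    rw [c, d, Finset.prod_filter, ← Finset.prod_mul_distrib, ← Finset.prod_mul_distrib]
    refine Finset.prod_congr rfl fun i _ => ?_
    simp only [ha]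
    split_ifs
    · field_simp
    · ring
  rw [hprod, ENNReal.ofReal_mul (by positivity), mul_assoc]
  gcongr
  exact le_trans (by gcongr) main
end

section
/- Let 2 ≤ p ≤ n be integers, r > 0, and let u : Δⁿ_p(r) → [0,∞] be convex. Then for all i ≠ j in {1,…,p} and every x ∈ Δⁿ_p(r/2) with (x_i,x_j) ≠ (0,0) and x_k > 0 for every k ∈ {1,…,p} ∖ {i,j}, one has (r/2)^{n−p} · (x_i + x_j)² · (∏_{k ∈ {1,…,p}∖{i,j}} x_k) · u(x) ≤ x_j · ∫_{∂_iΔⁿ_p(r)} u dx' + x_i · ∫_{∂_jΔⁿ_p(r)} u dx'. -/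
open MeasureTheory
open scoped ENNReal

/-- The `(n−1)`-dimensional Lebesgue measure on the hyperplane `{xᵢ = 0} ⊆ ℝⁿ`,
realized as the product of Lebesgue measures in the coordinates `j ≠ i` with the
Dirac mass at `0` in the coordinate `i`. -/
noncomputable def hyperplaneMeasure (n : ℕ) (i : Fin n) : Measure (Fin n → ℝ) :=
  Measure.pi (fun j => if j = i then Measure.dirac 0 else volume)

/-- `∂ᵢΔⁿ_p(r) = { x ∈ Δⁿ_p(r) : xᵢ = 0 }`. -/
def slabFace (n p : ℕ) (r : ℝ) (i : Fin n) : Set (Fin n → ℝ) :=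
  {x ∈ stdSlab n p r | x i = 0}

/-- `∫_{∂ᵢΔⁿ_p(r)} u dx'`, the integral of `u` over the boundary face `∂ᵢΔⁿ_p(r)`
with respect to the `(n−1)`-dimensional Lebesgue measure of the hyperplane `{xᵢ=0}`. -/
noncomputable def faceIntegral (n p : ℕ) (r : ℝ) (i : Fin n)
    (u : (Fin n → ℝ) → ℝ≥0∞) : ℝ≥0∞ :=
  ∫⁻ x in slabFace n p r i, u x ∂(hyperplaneMeasure n i)


lemma mve_box {m : ℕ} (hm : 1 ≤ m) (b w : Fin m → ℝ) (hw : ∀ k, 0 < w k)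
    (v : (Fin m → ℝ) → ℝ≥0∞)
    (hv : Convex ℝ {y | y ∈ Set.univ.pi (fun k => Set.Ioo (b k - w k) (b k + w k)) ∧ v y < v b}) :
    ENNReal.ofReal (∏ k, w k) * v b ≤
      ∫⁻ y in Set.univ.pi (fun k => Set.Ioo (b k - w k) (b k + w k)), v y := by
  set B := Set.univ.pi (fun k => Set.Ioo (b k - w k) (b k + w k)) with hB
  set C := {y | y ∈ B ∧ v y < v b} with hC
  have hBo : IsOpen B := isOpen_set_pi Set.finite_univ (fun k _ => isOpen_Ioo)
  have hBm : MeasurableSet B := hBo.measurableSet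
  have hvol : volume B = 2 ^ m * ENNReal.ofReal (∏ k, w k) := by
    rw [hB, Real.volume_pi_Ioo]
    rw [ENNReal.ofReal_prod_of_nonneg (fun k _ => (hw k).le)]
    have : ∀ k, ENNReal.ofReal (b k + w k - (b k - w k)) = 2 * ENNReal.ofReal (w k) := by
      intro k
      rw [show b k + w k - (b k - w k) = 2 * w k by ring, ENNReal.ofReal_mul (by norm_num)]
      simp
    rw [Finset.prod_congr rfl (fun k _ => this k), Finset.prod_mul_distrib]
    simp
  have hBfin : volume B ≠ ∞ := by
    rw [hvol]; exact ENNReal.mul_ne_top (by simp) (by simp)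
  set I := interior C with hI
  have hIC : I ⊆ C := interior_subset
  have hIB : I ⊆ B := fun y hy => (hIC hy).1
  have hIm : MeasurableSet I := isOpen_interior.measurableSet
  let ρ : (Fin m → ℝ) → (Fin m → ℝ) := fun y => (b + b) - y
  have hρ : MeasurePreserving ρ volume volume := Measure.measurePreserving_sub_left volume (b + b)
  have hdis : Disjoint I (ρ ⁻¹' I) := by
    rw [Set.disjoint_left]
    intro y hy hy'
    have h1 : y ∈ C := hIC hy
    have h2 : ρ y ∈ C := hIC hy'
    have h3 := hv h1 h2 (by norm_num : (0:ℝ) ≤ 1/2) (by norm_num : (0:ℝ) ≤ 1/2) (by norm_num)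
    have h4 : (1/2 : ℝ) • y + (1/2 : ℝ) • ρ y = b := by
      ext k; simp [ρ]; ring
    rw [h4] at h3
    exact lt_irrefl _ h3.2
  have hρB : ρ ⁻¹' I ⊆ B := by
    intro y hy
    have := hIB hy
    intro k _
    have := this k trivial
    simp only [ρ, Set.mem_Ioo, Pi.sub_apply, Pi.add_apply] at this ⊢
    constructor <;> linarith [this.1, this.2]
  have h2I : volume I + volume I ≤ volume B := by
    calc volume I + volume I = volume I + volume (ρ ⁻¹' I) := by
          rw [hρ.measure_preimage hIm.nullMeasurableSet]
      _ = volume (I ∪ ρ ⁻¹' I) := (measure_union hdis (hρ.measurable hIm)).symm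
      _ ≤ volume B := measure_mono (Set.union_subset hIB hρB)
  have hcl : volume (closure C) ≤ volume I := by
    have : closure C = I ∪ frontier C := closure_eq_interior_union_frontier C
    rw [this]
    refine (measure_union_le _ _).trans ?_
    rw [Convex.addHaar_frontier volume hv, add_zero]
  have hA : ENNReal.ofReal (∏ k, w k) ≤ volume (B \ closure C) := by
    have h5 : volume B ≤ volume I + volume (B \ closure C) := by
      calc volume B ≤ volume (closure C ∪ (B \ closure C)) := measure_mono (by
            intro y hy; by_cases h : y ∈ closure C
            · exact Or.inl h
            · exact Or.inr ⟨hy, h⟩)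
        _ ≤ _ := (measure_union_le _ _).trans (by gcongr)
    have hIfin : volume I ≠ ∞ := ne_top_of_le_ne_top hBfin (measure_mono hIB)
    have h6 : volume I ≤ volume (B \ closure C) := 
      (ENNReal.add_le_add_iff_left hIfin).1 (h2I.trans h5)
    have h7 : volume B ≤ 2 * volume (B \ closure C) := by
      rw [two_mul]; exact h5.trans (by gcongr)
    have h8 : 2 * ENNReal.ofReal (∏ k, w k) ≤ volume B := by
      rw [hvol]; gcongr
      calc (2:ℝ≥0∞) = 2 ^ 1 := by simp
        _ ≤ 2 ^ m := pow_le_pow_right₀ (by norm_num) hm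
    exact (ENNReal.mul_le_mul_iff_right (by simp) (by simp)).1 (h8.trans h7)
  have hAm : MeasurableSet (B \ closure C) := hBm.diff isClosed_closure.measurableSet
  calc ENNReal.ofReal (∏ k, w k) * v b ≤ volume (B \ closure C) * v b := by gcongr
    _ = ∫⁻ y in B \ closure C, v b := by simp [mul_comm]
    _ ≤ ∫⁻ y in B \ closure C, v y := by
        refine setLIntegral_mono' hAm (fun y hy => ?_)
        by_contra h
        exact hy.2 (subset_closure ⟨hy.1, not_le.1 h⟩)
    _ ≤ ∫⁻ y in B, v y := lintegral_mono_set Set.diff_subset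

lemma mve_emb {m : ℕ} (i : Fin (m+1)) :
    MeasurableEmbedding (fun y : Fin m → ℝ => i.insertNth (α := fun _ => ℝ) (0:ℝ) y) := by
  have hm : Measurable (fun y : Fin m → ℝ => i.insertNth (α := fun _ => ℝ) (0:ℝ) y) := by
    refine measurable_pi_lambda _ (fun k => ?_)
    refine Fin.succAboveCases i ?_ (fun l => ?_) k
    · simp
    · simp; exact measurable_pi_apply l
  refine MeasurableEmbedding.of_measurable_inverse
    (g := fun x : Fin (m+1) → ℝ => fun k => x (i.succAbove k)) hm ?_ ?_ ?_
  · have : Set.range (fun y : Fin m → ℝ => i.insertNth (α := fun _ => ℝ) (0:ℝ) y)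
        = {x | x i = 0} := by
      ext x
      constructor
      · rintro ⟨y, rfl⟩; simp
      · intro hx
        refine ⟨fun k => x (i.succAbove k), ?_⟩
        ext k
        refine Fin.succAboveCases i ?_ (fun l => ?_) k
        · simpa using hx.symm
        · simp
    rw [this]
    exact (measurable_pi_apply i) (measurableSet_singleton 0)
  · exact measurable_pi_lambda _ (fun k => measurable_pi_apply _)
  · intro y; ext k; simp

lemma mve_measure {m : ℕ} (i : Fin (m+1)) :
    hyperplaneMeasure (m+1) i =
      Measure.map (fun y : Fin m → ℝ => i.insertNth (α := fun _ => ℝ) (0:ℝ) y) volume := by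
  unfold hyperplaneMeasure
  haveI : ∀ j, SigmaFinite (if j = i then Measure.dirac (0:ℝ) else volume) := by
    intro j; split_ifs <;> infer_instance
  refine Measure.pi_eq (fun s hs => ?_)
  rw [(mve_emb i).map_apply, Fin.prod_univ_succAbove _ i]
  have hpre : (fun y : Fin m → ℝ => i.insertNth (α := fun _ => ℝ) (0:ℝ) y) ⁻¹' Set.univ.pi s
      = {y | (0:ℝ) ∈ s i ∧ y ∈ Set.univ.pi (fun k => s (i.succAbove k))} := by
    ext y
    simp only [Set.mem_preimage, Set.mem_pi, Set.mem_univ, forall_true_left, Set.mem_setOf_eq]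
    rw [Fin.forall_iff_succAbove i]
    simp
  rw [hpre]
  simp only [if_true, Fin.succAbove_ne, if_false]
  rw [Measure.dirac_apply' _ (hs i)]
  by_cases h : (0:ℝ) ∈ s i
  · have h2 : {y : Fin m → ℝ | (0:ℝ) ∈ s i ∧ y ∈ Set.univ.pi (fun k => s (i.succAbove k))}
        = Set.univ.pi (fun k => s (i.succAbove k)) := by
      ext y
      exact ⟨fun hy => hy.2, fun hy => ⟨h, hy⟩⟩
    rw [h2, volume_pi_pi]
    simp [h]
  · simp [h]

lemma mve_quasi {n : ℕ} {K : Set (Fin n → ℝ)} {u : (Fin n → ℝ) → ℝ≥0∞} (hu : ConvexFnOn K u)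
    {x y : Fin n → ℝ} (hx : x ∈ K) (hy : y ∈ K) {c : ℝ≥0∞} (hxc : u x < c) (hyc : u y < c)
    {s t : ℝ} (hs : 0 ≤ s) (ht : 0 ≤ t) (hst : s + t = 1) : u (s • x + t • y) < c := by
  obtain rfl : s = 1 - t := by linarith
  refine (hu hx hy ht (by linarith)).trans_lt ?_
  calc _ ≤ ENNReal.ofReal (1 - t) * max (u x) (u y) + ENNReal.ofReal t * max (u x) (u y) := by
        gcongr
        · exact le_max_left _ _
        · exact le_max_right _ _
    _ = max (u x) (u y) := by
        rw [← add_mul, ← ENNReal.ofReal_add hs ht]; simp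
    _ < c := max_lt hxc hyc

lemma mve_face (n p : ℕ) (hn : 2 ≤ n) (hpn : p ≤ n)
    (r : ℝ) (hr : 0 < r) (u : (Fin n → ℝ) → ℝ≥0∞)
    (hu : ConvexFnOn (stdSlab n p r) u) (i : Fin n) (hi : (i : ℕ) < p)
    (a : Fin n → ℝ) (ha : a ∈ stdSlab n p (r / 2)) (hai : a i = 0)
    (hpos : ∀ k : Fin n, (k : ℕ) < p → k ≠ i → 0 < a k) :
    ENNReal.ofReal ((r / 2) ^ (n - p) *
      ∏ k ∈ Finset.univ.filter (fun k : Fin n => (k : ℕ) < p ∧ k ≠ i), a k) * u a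
      ≤ faceIntegral n p r i u := by
  obtain ⟨m, rfl⟩ : ∃ m, n = m + 1 := ⟨n - 1, by omega⟩
  let φ : (Fin m → ℝ) → (Fin (m+1) → ℝ) := fun y => i.insertNth (α := fun _ => ℝ) (0:ℝ) y
  have hφi : ∀ y, φ y i = 0 := fun y => by simp [φ]
  have hφs : ∀ y k, φ y (i.succAbove k) = y k := fun y k => by simp [φ]
  let W : Fin (m+1) → ℝ := fun k => if (k : ℕ) < p then a k else r / 2
  let b : Fin m → ℝ := fun k => a (i.succAbove k)
  let w : Fin m → ℝ := fun k => W (i.succAbove k)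
  have hφb : φ b = a := by
    ext k
    refine Fin.succAboveCases i ?_ (fun l => ?_) k
    · rw [hφi, hai]
    · rw [hφs]
  have hw : ∀ k, 0 < w k := by
    intro k
    simp only [w, W]
    split_ifs with h
    · exact hpos _ h (Fin.succAbove_ne i k)
    · linarith
  have hprod : (r / 2) ^ (m + 1 - p) *
      ∏ k ∈ Finset.univ.filter (fun k : Fin (m+1) => (k : ℕ) < p ∧ k ≠ i), a k = ∏ k, w k := by
    have h1 : ∏ k, w k = ∏ k ∈ Finset.univ.filter (fun k : Fin (m+1) => k ≠ i), W k := by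
      rw [Finset.prod_filter, Fin.prod_univ_succAbove _ i]
      simp [w, Fin.succAbove_ne]
    rw [h1, ← Finset.prod_filter_mul_prod_filter_not
        (Finset.univ.filter (fun k : Fin (m+1) => k ≠ i)) (fun k : Fin (m+1) => (k : ℕ) < p) W,
      mul_comm, Finset.filter_filter, Finset.filter_filter]
    congr 1
    · refine Finset.prod_congr (by ext k; simp [and_comm]) (fun k hk => ?_)
      simp only [Finset.mem_filter] at hk
      simp [W, hk.2]
    · have : ∀ k ∈ Finset.univ.filter (fun k : Fin (m+1) => k ≠ i ∧ ¬ (k : ℕ) < p), W k = r / 2 := by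
        intro k hk
        simp only [Finset.mem_filter] at hk
        simp [W, hk.2]
      rw [Finset.prod_congr rfl this, Finset.prod_const]
      congr 1
      have h2 : (Finset.univ.filter (fun k : Fin (m+1) => k ≠ i ∧ ¬ (k : ℕ) < p))
          = Finset.univ.filter (fun k : Fin (m+1) => ¬ (k : ℕ) < p) := by
        ext k
        simp only [Finset.mem_filter, Finset.mem_univ, true_and]
        constructor
        · exact fun h => h.2
        · intro h; exact ⟨fun hk => h (hk ▸ hi), h⟩
      have h3 := Finset.card_filter_add_card_filter_not (s := (Finset.univ : Finset (Fin (m+1))))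
        (fun k : Fin (m+1) => (k : ℕ) < p)
      rw [h2]
      have h4 : (Finset.univ.filter (fun k : Fin (m+1) => (k : ℕ) < p)).card = p := by
        rw [Fin.card_filter_val_lt]; omega
      simp only [Finset.card_univ, Fintype.card_fin] at h3
      omega
  set B := Set.univ.pi (fun k => Set.Ioo (b k - w k) (b k + w k)) with hB
  have hBf : ∀ y ∈ B, φ y ∈ slabFace (m+1) p r i := by
    intro y hy
    have key : ∀ l : Fin m, b l - w l < y l ∧ y l < b l + w l := fun l => hy l trivial
    refine ⟨⟨fun k => ?_, fun k => ?_, ?_⟩, hφi y⟩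
    · refine Fin.succAboveCases i ?_ (fun l => ?_) k
      · intro _; rw [hφi]
      · intro hl
        have := (key l).1
        simp only [b, w, W, hl, if_true] at this
        rw [hφs]; linarith
    · refine Fin.succAboveCases i ?_ (fun l => ?_) k
      · intro h; omega
      · intro hl
        have h1 := key l
        have h2 := ha.2.1 _ hl
        simp only [b, w, W, not_lt.2 hl, if_false] at h1
        rw [hφs]
        exact ⟨by linarith [h2.1], by linarith [h2.2]⟩
    · have h1 : ∀ k ∈ Finset.univ.filter (fun k : Fin (m+1) => (k : ℕ) < p), φ y k ≤ 2 * a k := by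
        intro k
        refine Fin.succAboveCases i ?_ (fun l => ?_) k
        · intro _; rw [hφi, hai]; simp
        · intro hl
          simp only [Finset.mem_filter, Finset.mem_univ, true_and] at hl
          have h1 := (key l).2
          simp only [b, w, W, hl, if_true] at h1
          rw [hφs]; linarith
      refine (Finset.sum_le_sum h1).trans_lt ?_
      rw [← Finset.mul_sum]
      linarith [ha.2.2]
  have hBconv : Convex ℝ B := convex_pi (fun k _ => convex_Ioo _ _)
  have hlin : ∀ (s t : ℝ) y z, φ (s • y + t • z) = s • φ y + t • φ z := by
    intro s t y z
    ext k
    refine Fin.succAboveCases i ?_ (fun l => ?_) k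
    · simp [hφi]
    · simp [hφs]
  have hC : Convex ℝ {y | y ∈ B ∧ u (φ y) < u (φ b)} := by
    intro y hy z hz s t hs ht hst
    refine ⟨hBconv hy.1 hz.1 hs ht hst, ?_⟩
    rw [hlin]
    exact mve_quasi hu (hBf y hy.1).1 (hBf z hz.1).1 hy.2 hz.2 hs ht hst
  have hmain := mve_box (by omega) b w hw (fun y => u (φ y)) hC
  simp only [hφb] at hmain
  rw [hprod]
  refine hmain.trans ?_
  unfold faceIntegral
  rw [mve_measure, (mve_emb i).restrict_map, (mve_emb i).lintegral_map]
  exact lintegral_mono_set hBf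

lemma mve_half (n p : ℕ) (hp : 2 ≤ p) (hpn : p ≤ n)
    (r : ℝ) (hr : 0 < r) (u : (Fin n → ℝ) → ℝ≥0∞)
    (hu : ConvexFnOn (stdSlab n p r) u) (i j : Fin n)
    (hi : (i : ℕ) < p) (hj : (j : ℕ) < p) (hij : i ≠ j)
    (x : Fin n → ℝ) (hx : x ∈ stdSlab n p (r / 2)) (hs : 0 < x i + x j)
    (hpos : ∀ k : Fin n, (k : ℕ) < p → k ≠ i → k ≠ j → 0 < x k) :
    let a : Fin n → ℝ := fun k => x k + (if k = i then - x i else 0) + (if k = j then x i else 0)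
    a ∈ stdSlab n p (r / 2) ∧
    ENNReal.ofReal ((r / 2) ^ (n - p) * ((x i + x j) *
      ∏ k ∈ Finset.univ.filter (fun k : Fin n => (k : ℕ) < p ∧ k ≠ i ∧ k ≠ j), x k)) * u a
      ≤ faceIntegral n p r i u := by
  intro a
  have hai : a i = 0 := by simp [a, hij]
  have haj : a j = x i + x j := by simp [a, hij.symm]; ring
  have hak : ∀ k, k ≠ i → k ≠ j → a k = x k := by intro k h1 h2; simp [a, h1, h2]
  have hapos : ∀ k : Fin n, (k : ℕ) < p → k ≠ i → 0 < a k := by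
    intro k hk hki
    by_cases hkj : k = j
    · rw [hkj, haj]; exact hs
    · rw [hak k hki hkj]; exact hpos k hk hki hkj
  have ha : a ∈ stdSlab n p (r / 2) := by
    refine ⟨fun k hk => ?_, fun k hk => ?_, ?_⟩
    · by_cases hki : k = i
      · rw [hki, hai]
      · exact (hapos k hk hki).le
    · rw [hak k (by rintro rfl; omega) (by rintro rfl; omega)]
      exact hx.2.1 k hk
    · have : ∑ k ∈ Finset.univ.filter (fun k : Fin n => (k : ℕ) < p), a k =
          ∑ k ∈ Finset.univ.filter (fun k : Fin n => (k : ℕ) < p), x k := by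
        simp only [a, Finset.sum_add_distrib, Finset.sum_ite_eq', Finset.mem_filter,
          Finset.mem_univ, true_and, hi, hj, if_true]
        ring
      rw [this]; exact hx.2.2
  refine ⟨ha, ?_⟩
  have := mve_face n p (by omega) hpn r hr u hu i hi a ha hai hapos
  have hprod : ∏ k ∈ Finset.univ.filter (fun k : Fin n => (k : ℕ) < p ∧ k ≠ i), a k =
      (x i + x j) *
      ∏ k ∈ Finset.univ.filter (fun k : Fin n => (k : ℕ) < p ∧ k ≠ i ∧ k ≠ j), x k := by
    have hins : Finset.univ.filter (fun k : Fin n => (k : ℕ) < p ∧ k ≠ i) =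
        insert j (Finset.univ.filter (fun k : Fin n => (k : ℕ) < p ∧ k ≠ i ∧ k ≠ j)) := by
      ext k
      simp only [Finset.mem_filter, Finset.mem_univ, true_and, Finset.mem_insert]
      by_cases hkj : k = j
      · subst hkj; simp [hj, hij.symm]
      · simp [hkj]
    rw [hins, Finset.prod_insert (by simp), haj]
    congr 1
    refine Finset.prod_congr rfl (fun k hk => ?_)
    simp only [Finset.mem_filter] at hk
    exact hak k hk.2.2.1 hk.2.2.2
  rwa [hprod] at this

/-- Boundary mean value estimate: for `2 ≤ p ≤ n`, a convex
`u : Δⁿ_p(r) → [0,∞]`, `i ≠ j` among the first `p` coordinates and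
`x ∈ Δⁿ_p(r/2)` with `(xᵢ,xⱼ) ≠ (0,0)` and `x_k > 0` for `k < p`, `k ≠ i, j`:
`(r/2)^{n−p} (xᵢ+xⱼ)² (∏_{k<p, k≠i,j} x_k) u(x) ≤ xⱼ ∫_{∂ᵢΔ} u dx' + xᵢ ∫_{∂ⱼΔ} u dx'`. -/
theorem boundary_mean_value_estimate (n p : ℕ) (hp : 2 ≤ p) (hpn : p ≤ n)
    (r : ℝ) (hr : 0 < r) (u : (Fin n → ℝ) → ℝ≥0∞)
    (hu : ConvexFnOn (stdSlab n p r) u) (i j : Fin n)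
    (hi : (i : ℕ) < p) (hj : (j : ℕ) < p) (hij : i ≠ j) :
    ∀ x ∈ stdSlab n p (r / 2), ¬(x i = 0 ∧ x j = 0) →
      (∀ k : Fin n, (k : ℕ) < p → k ≠ i → k ≠ j → 0 < x k) →
      ENNReal.ofReal ((r / 2) ^ (n - p) * (x i + x j) ^ 2 *
          ∏ k ∈ Finset.univ.filter (fun k : Fin n => (k : ℕ) < p ∧ k ≠ i ∧ k ≠ j), x k)
          * u x
        ≤ ENNReal.ofReal (x j) * faceIntegral n p r i u
            + ENNReal.ofReal (x i) * faceIntegral n p r j u := by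

  intro x hx hne hpos
  have hxi : 0 ≤ x i := hx.1 i hi
  have hxj : 0 ≤ x j := hx.1 j hj
  have hs : 0 < x i + x j := by
    rcases hxi.lt_or_eq with h | h
    · linarith
    · rcases hxj.lt_or_eq with h' | h'
      · linarith
      · exact absurd ⟨h.symm, h'.symm⟩ hne
  obtain ⟨ha, hA⟩ := mve_half n p hp hpn r hr u hu i j hi hj hij x hx hs hpos
  obtain ⟨hb, hB⟩ := mve_half n p hp hpn r hr u hu j i hj hi hij.symm x hx (by linarith)
    (fun k hk h1 h2 => hpos k hk h2 h1)
  set a : Fin n → ℝ := fun k => x k + (if k = i then - x i else 0) + (if k = j then x i else 0)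
    with ha_def
  set b : Fin n → ℝ := fun k => x k + (if k = j then - x j else 0) + (if k = i then x j else 0)
    with hb_def
  have hfil : Finset.univ.filter (fun k : Fin n => (k : ℕ) < p ∧ k ≠ j ∧ k ≠ i) =
      Finset.univ.filter (fun k : Fin n => (k : ℕ) < p ∧ k ≠ i ∧ k ≠ j) := by
    ext k; simp; tauto
  rw [hfil, add_comm (x j) (x i)] at hB
  set P := ∏ k ∈ Finset.univ.filter (fun k : Fin n => (k : ℕ) < p ∧ k ≠ i ∧ k ≠ j), x k with hP
  have hP0 : 0 ≤ P := Finset.prod_nonneg (fun k hk => by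
    simp only [Finset.mem_filter] at hk
    exact hx.1 k hk.2.1)
  have hsub : stdSlab n p (r / 2) ⊆ stdSlab n p r := by
    intro y hy
    refine ⟨hy.1, fun k hk => ?_, by linarith [hy.2.2]⟩
    have := hy.2.1 k hk
    exact ⟨by linarith [this.1], by linarith [this.2]⟩
  set s := x i + x j with hs_def
  have ht1 : x i / s ≤ 1 := by rw [div_le_one hs]; linarith
  have h1t : 1 - x i / s = x j / s := by rw [hs_def] at hs ⊢; field_simp; ring
  have hconv := hu (hsub ha) (hsub hb) (div_nonneg hxi hs.le) ht1
  have hcomb : (1 - x i / s) • a + (x i / s) • b = x := by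
    rw [h1t]
    ext k
    simp only [ha_def, hb_def, Pi.add_apply, Pi.smul_apply, smul_eq_mul]
    have hxk : x j / s * x k + x i / s * x k = x k := by
      rw [← h1t]; ring
    by_cases h1 : k = i
    · have h2 : k ≠ j := fun h => hij (h1.symm.trans h)
      simp only [h1, hij, if_true, if_false]
      rw [h1] at hxk
      linear_combination hxk
    · by_cases h2 : k = j
      · simp only [h2, hij.symm, if_true, if_false]
        rw [h2] at hxk
        linear_combination hxk
      · simp only [h1, h2, if_false]
        linear_combination hxk
  rw [hcomb, h1t] at hconv
  set Q := (r / 2) ^ (n - p) with hQ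
  have hQ0 : 0 ≤ Q := by positivity
  have e1 : ENNReal.ofReal (Q * s ^ 2 * P) * ENNReal.ofReal (x j / s) =
      ENNReal.ofReal (x j) * ENNReal.ofReal (Q * (s * P)) := by
    rw [← ENNReal.ofReal_mul (by positivity), ← ENNReal.ofReal_mul hxj]
    congr 1; field_simp
  have e2 : ENNReal.ofReal (Q * s ^ 2 * P) * ENNReal.ofReal (x i / s) =
      ENNReal.ofReal (x i) * ENNReal.ofReal (Q * (s * P)) := by
    rw [← ENNReal.ofReal_mul (by positivity), ← ENNReal.ofReal_mul hxi]
    congr 1; field_simp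
  calc ENNReal.ofReal (Q * s ^ 2 * P) * u x
      ≤ ENNReal.ofReal (Q * s ^ 2 * P) *
        (ENNReal.ofReal (x j / s) * u a + ENNReal.ofReal (x i / s) * u b) := by gcongr
    _ = ENNReal.ofReal (x j) * (ENNReal.ofReal (Q * (s * P)) * u a) +
        ENNReal.ofReal (x i) * (ENNReal.ofReal (Q * (s * P)) * u b) := by
        rw [mul_add, ← mul_assoc, ← mul_assoc, e1, e2, mul_assoc, mul_assoc]
    _ ≤ _ := by gcongr
end
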